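/- arXiv:2301.08580 — 2 statements merged into one kernel-verified Lean document; each statement's English description precedes it below -/
import Mathlib

section
/- Let κ > -1 and ρ > -1 be real and let m, n be nonnegative integers. For every w ∈ ℂ write F(u) := Z^{κ,ρ}_{m,n}(u,w). Then for every z ∈ ℂ with z ≠ 0, F satisfies the second-order differential equation z²(1-zw)·F''(z) + ((m+ρ-n+1) - (κ+m+ρ-n+2)·zw)·z·F'(z) + n(κ+m+ρ+1)·zw·F(z) = ρ(n-m)·F(z), where derivatives are complex derivatives in u with w held fixed. -/
open Complex Finset

/-- The fractional Zernike function `Z^{κ,ρ}_{m,n}(z,w)`, viewed as a function of two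
independent complex variables. -/
noncomputable def fracZernike (κ ρ : ℝ) (m n : ℕ) (z w : ℂ) : ℂ :=
  ∑ j ∈ Finset.range (m + 1),
    ((-1 : ℂ) ^ j * (Nat.factorial m : ℂ) * Complex.Gamma ((n : ℂ) + ρ + 1) *
        Complex.Gamma ((κ : ℂ) + m + 1) /
      ((Nat.factorial j : ℂ) * (Nat.factorial (m - j) : ℂ) *
        Complex.Gamma ((n : ℂ) + ρ - j + 1) * Complex.Gamma ((κ : ℂ) + j + 1))) *
    (1 - z * w) ^ j * z ^ ((n : ℤ) - (j : ℤ)) * w ^ (m - j)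

/-!
Put `x = z w` and let `θ = z d/dz`. The equation factors as
`(θ + ρ) (θ + m - n) F = x (θ - n) (θ + κ + m + ρ + 1) F`. On the building blocks
`T_j = (1 - z w) ^ j z ^ (n - j) w ^ (m - j)` one has `θ T_j = (n - j) T_j - j T_{j-1}` and
`x (T_j + T_{j-1}) = T_{j-1}`, so the difference of the two sides sends `T_j` to
`(m - j) (n + ρ - j) T_j + j (j + κ) T_{j-1}`. The coefficients of `F` are exactly those for
which the resulting sum telescopes to zero. Quotients of Gamma values enter only as Pochhammer
products, which make sense for all parameters in any field.
-/

section PochhammerForm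

open Filter Topology

variable {𝕜 : Type*}

/-- The coefficient of the `j`-th term of the fractional Zernike function, with the quotients of
Gamma values replaced by Pochhammer products, so that `κ` and `ρ` may be arbitrary elements of a
commutative ring and `n` any integer. -/
noncomputable def zernikeCoeff [CommRing 𝕜] (κ ρ : 𝕜) (m : ℕ) (n : ℤ) (j : ℕ) : 𝕜 :=
  (-1) ^ j * m.choose j * (descPochhammer 𝕜 j).eval (n + ρ) *
    (ascPochhammer 𝕜 (m - j)).eval (κ + j + 1)

/-- The building block `(1 - z w) ^ j z ^ (n - j) w ^ (m - j)` of the fractional Zernike function.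
It is meant for `j ≤ m`, where `m - j` is not truncated. -/
def zernikeTerm [Field 𝕜] (m : ℕ) (n : ℤ) (j : ℕ) (w z : 𝕜) : 𝕜 :=
  (1 - z * w) ^ j * z ^ (n - j) * w ^ (m - j)

/-- The fractional Zernike function with Pochhammer products in place of Gamma quotients. -/
noncomputable def pochhammerZernike [Field 𝕜] (κ ρ : 𝕜) (m : ℕ) (n : ℤ) (z w : 𝕜) : 𝕜 :=
  ∑ j ∈ range (m + 1), zernikeCoeff κ ρ m n j * zernikeTerm m n j w z

theorem zernikeCoeff_succ_mul [CommRing 𝕜] (κ ρ : 𝕜) (m : ℕ) (n : ℤ) (j : ℕ) :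
    zernikeCoeff κ ρ m n (j + 1) * ((j + 1) * (j + 1 + κ)) =
      -(zernikeCoeff κ ρ m n j * ((m - j) * (n + ρ - j))) := by
  rcases lt_trichotomy j m with hlt | rfl | hgt
  · obtain ⟨k, rfl⟩ := Nat.exists_eq_add_of_lt hlt
    have hchoose : ((j + k + 1).choose (j + 1) : 𝕜) * (j + 1) = (j + k + 1).choose j * (k + 1) := by
      have h := Nat.choose_succ_right_eq (j + k + 1) j
      rw [show j + k + 1 - j = k + 1 by lia] at h
      exact_mod_cast congrArg (Nat.cast : ℕ → 𝕜) h
    have hasc : (ascPochhammer 𝕜 (k + 1)).eval (κ + j + 1) =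
        (κ + j + 1) * (ascPochhammer 𝕜 k).eval (κ + (j + 1 : ℕ) + 1) := by
      simp [ascPochhammer_succ_left, add_assoc]
    rw [zernikeCoeff, zernikeCoeff, descPochhammer_succ_eval,
      show j + k + 1 - (j + 1) = k by lia, show j + k + 1 - j = k + 1 by lia, hasc]
    push_cast
    linear_combination (-1) ^ (j + 1) * (descPochhammer 𝕜 j).eval (n + ρ) * (n + ρ - j) *
      (κ + j + 1) * (ascPochhammer 𝕜 k).eval (κ + (j + 1) + 1) * hchoose
  · simp [zernikeCoeff]
  · simp [zernikeCoeff, Nat.choose_eq_zero_of_lt hgt,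
      Nat.choose_eq_zero_of_lt (hgt.trans j.lt_succ_self)]

theorem mul_zernikeTerm_sub_one [Field 𝕜] (m : ℕ) (n : ℤ) (j : ℕ) (w : 𝕜) {z : 𝕜} (hz : z ≠ 0) :
    z * zernikeTerm m (n - 1) j w z = zernikeTerm m n j w z := by
  rw [zernikeTerm, zernikeTerm, sub_right_comm, zpow_sub_one₀ hz]
  field_simp

theorem mul_zernikeTerm_succ_add [Field 𝕜] {m j : ℕ} (hj : j < m) (n : ℤ) (w : 𝕜) {z : 𝕜}
    (hz : z ≠ 0) :
    z * w * (zernikeTerm m n (j + 1) w z + zernikeTerm m n j w z) = zernikeTerm m n j w z := by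
  obtain ⟨k, rfl⟩ := Nat.exists_eq_add_of_lt hj
  rw [zernikeTerm, zernikeTerm, show j + k + 1 - (j + 1) = k by lia,
    show j + k + 1 - j = k + 1 by lia,
    show n - (j : ℤ) = n - (j + 1 : ℕ) + 1 by push_cast; ring, zpow_add_one₀ hz]
  ring

variable [NontriviallyNormedField 𝕜]

theorem hasDerivAt_zernikeTerm {m j : ℕ} (hj : j ≤ m) (n : ℤ) (w : 𝕜) {z : 𝕜} (hz : z ≠ 0) :
    HasDerivAt (zernikeTerm m n j w)
      ((n - j) * zernikeTerm m (n - 1) j w z - j * zernikeTerm m (n - 1) (j - 1) w z) z := by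
  have hlin : HasDerivAt (fun u => 1 - u * w) (-w) z := by
    simpa using ((hasDerivAt_id z).mul_const w).const_sub 1
  have hprod :=
    ((hlin.fun_pow j).mul (hasDerivAt_zpow (n - j) z (Or.inl hz))).mul_const (w ^ (m - j))
  refine hprod.congr_deriv ?_
  rw [zernikeTerm, zernikeTerm, sub_right_comm n 1]
  rcases j with _ | j
  · simp [mul_assoc]
  · obtain ⟨k, rfl⟩ := Nat.exists_eq_add_of_le hj
    rw [show j + 1 + k - (j + 1) = k by lia, show j + 1 + k - (j + 1 - 1) = k + 1 by lia,
      Nat.add_sub_cancel, show n - 1 - (j : ℤ) = n - (j + 1 : ℕ) by push_cast; ring]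
    push_cast
    ring

theorem hasDerivAt_deriv_zernikeTerm {m j : ℕ} (hj : j ≤ m) (n : ℤ) (w : 𝕜) {z : 𝕜}
    (hz : z ≠ 0) :
    HasDerivAt (deriv (zernikeTerm m n j w))
      ((n - j) * (n - j - 1) * zernikeTerm m (n - 1 - 1) j w z
        - 2 * j * (n - j) * zernikeTerm m (n - 1 - 1) (j - 1) w z
        + j * (j - 1) * zernikeTerm m (n - 1 - 1) (j - 1 - 1) w z) z := by
  have hderiv : deriv (zernikeTerm m n j w) =ᶠ[𝓝 z] fun u =>
      (n - j) * zernikeTerm m (n - 1) j w u - j * zernikeTerm m (n - 1) (j - 1) w u := by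
    filter_upwards [isOpen_ne.mem_nhds hz] with u hu using (hasDerivAt_zernikeTerm hj n w hu).deriv
  have hj' : j - 1 ≤ m := (j.sub_le 1).trans hj
  have hcomb := ((hasDerivAt_zernikeTerm hj (n - 1) w hz).const_mul (n - j : 𝕜)).sub
    ((hasDerivAt_zernikeTerm hj' (n - 1) w hz).const_mul (j : 𝕜))
  refine (hcomb.congr_of_eventuallyEq hderiv).congr_deriv ?_
  rcases j with _ | j
  · push_cast
    ring
  · rw [Nat.add_sub_cancel]
    push_cast
    ring

theorem mul_deriv_zernikeTerm {m j : ℕ} (hj : j ≤ m) (n : ℤ) (w : 𝕜) {z : 𝕜} (hz : z ≠ 0) :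
    z * deriv (zernikeTerm m n j w) z =
      (n - j) * zernikeTerm m n j w z - j * zernikeTerm m n (j - 1) w z := by
  rw [(hasDerivAt_zernikeTerm hj n w hz).deriv, ← mul_zernikeTerm_sub_one m n j w hz,
    ← mul_zernikeTerm_sub_one m n (j - 1) w hz]
  ring

theorem sq_mul_deriv_deriv_zernikeTerm {m j : ℕ} (hj : j ≤ m) (n : ℤ) (w : 𝕜) {z : 𝕜}
    (hz : z ≠ 0) :
    z ^ 2 * deriv (deriv (zernikeTerm m n j w)) z =
      (n - j) * (n - j - 1) * zernikeTerm m n j w z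
        - 2 * j * (n - j) * zernikeTerm m n (j - 1) w z
        + j * (j - 1) * zernikeTerm m n (j - 1 - 1) w z := by
  have hsq (i : ℕ) : zernikeTerm m n i w z = z * (z * zernikeTerm m (n - 1 - 1) i w z) := by
    rw [mul_zernikeTerm_sub_one m (n - 1) i w hz, mul_zernikeTerm_sub_one m n i w hz]
  rw [(hasDerivAt_deriv_zernikeTerm hj n w hz).deriv, hsq j, hsq (j - 1), hsq (j - 1 - 1)]
  ring

/-- The differential operator whose kernel contains the fractional Zernike function. With
`θ = z d/dz` it is `(θ + ρ) (θ + m - n) - z w (θ - n) (θ + κ + m + ρ + 1)`. -/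
noncomputable def zernikeOperator (κ ρ m n w : 𝕜) (f : 𝕜 → 𝕜) (z : 𝕜) : 𝕜 :=
  z ^ 2 * (1 - z * w) * deriv (deriv f) z
    + ((m + ρ - n + 1) - (κ + m + ρ - n + 2) * (z * w)) * z * deriv f z
    + n * (κ + m + ρ + 1) * (z * w) * f z - ρ * (n - m) * f z

theorem zernikeOperator_sum_const_mul {ι : Type*} (κ ρ m n w z : 𝕜) (s : Finset ι) (c : ι → 𝕜)
    (f : ι → 𝕜 → 𝕜) (hf : ∀ i ∈ s, ∀ᶠ u in 𝓝 z, DifferentiableAt 𝕜 (f i) u)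
    (hf' : ∀ i ∈ s, DifferentiableAt 𝕜 (deriv (f i)) z) :
    zernikeOperator κ ρ m n w (fun u => ∑ i ∈ s, c i * f i u) z =
      ∑ i ∈ s, c i * zernikeOperator κ ρ m n w (f i) z := by
  have hderiv : deriv (fun u => ∑ i ∈ s, c i * f i u) =ᶠ[𝓝 z]
      fun u => ∑ i ∈ s, c i * deriv (f i) u := by
    filter_upwards [(eventually_all_finset s).2 hf] with u hu
    exact (HasDerivAt.fun_sum fun i hi => (hu i hi).hasDerivAt.const_mul (c i)).deriv
  have hderiv₂ : deriv (deriv fun u => ∑ i ∈ s, c i * f i u) z =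
      ∑ i ∈ s, c i * deriv (deriv (f i)) z := by
    rw [hderiv.deriv_eq]
    exact (HasDerivAt.fun_sum fun i hi => (hf' i hi).hasDerivAt.const_mul (c i)).deriv
  simp only [zernikeOperator, hderiv.eq_of_nhds, hderiv₂, mul_sum, ← sum_add_distrib,
    ← sum_sub_distrib]
  exact sum_congr rfl fun i _ => by ring

theorem zernikeOperator_zernikeTerm (κ ρ : 𝕜) {m j : ℕ} (hj : j ≤ m) (n : ℤ) (w : 𝕜) {z : 𝕜}
    (hz : z ≠ 0) :
    zernikeOperator κ ρ m n w (zernikeTerm m n j w) z =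
      (m - j) * (n + ρ - j) * zernikeTerm m n j w z
        + j * (j + κ) * zernikeTerm m n (j - 1) w z := by
  have hcontig : j * (z * w * (zernikeTerm m n j w z + zernikeTerm m n (j - 1) w z)) =
      j * zernikeTerm m n (j - 1) w z := by
    rcases j with _ | j
    · simp
    · rw [Nat.add_sub_cancel, mul_zernikeTerm_succ_add hj n w hz]
  have hcontig' : j * (j - 1) *
      (z * w * (zernikeTerm m n (j - 1) w z + zernikeTerm m n (j - 1 - 1) w z)) =
      j * (j - 1) * zernikeTerm m n (j - 1 - 1) w z := by
    rcases j with _ | _ | j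
    · simp
    · simp
    · rw [Nat.add_sub_cancel, Nat.add_sub_cancel,
        mul_zernikeTerm_succ_add (Nat.lt_of_succ_lt hj) n w hz]
  unfold zernikeOperator
  linear_combination (1 - z * w) * sq_mul_deriv_deriv_zernikeTerm hj n w hz
    + ((m + ρ - n + 1) - (κ + m + ρ - n + 2) * (z * w)) * mul_deriv_zernikeTerm hj n w hz
    + (κ + m + ρ + n - j + 1) * hcontig - hcontig'

theorem zernikeOperator_pochhammerZernike (κ ρ : 𝕜) (m : ℕ) (n : ℤ) (w : 𝕜) {z : 𝕜}
    (hz : z ≠ 0) :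
    zernikeOperator κ ρ m n w (fun u => pochhammerZernike κ ρ m n u w) z = 0 := by
  have hle {j : ℕ} (hj : j ∈ range (m + 1)) : j ≤ m := mem_range_succ_iff.1 hj
  let g (j : ℕ) : 𝕜 :=
    zernikeCoeff κ ρ m n j * (j * (j + κ)) * zernikeTerm m n (j - 1) w z
  have hterm : ∀ j ∈ range (m + 1),
      zernikeCoeff κ ρ m n j * zernikeOperator κ ρ m n w (zernikeTerm m n j w) z =
        g j - g (j + 1) := by
    intro j hj
    have hsucc := zernikeCoeff_succ_mul κ ρ m n j
    simp only [g, Nat.add_sub_cancel, Nat.cast_add_one]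
    rw [zernikeOperator_zernikeTerm κ ρ (hle hj) n w hz]
    linear_combination zernikeTerm m n j w z * hsucc
  calc zernikeOperator κ ρ m n w (fun u => pochhammerZernike κ ρ m n u w) z
      = ∑ j ∈ range (m + 1),
          zernikeCoeff κ ρ m n j * zernikeOperator κ ρ m n w (zernikeTerm m n j w) z := by
        refine zernikeOperator_sum_const_mul κ ρ m n w z _ _ _ (fun j hj => ?_) fun j hj =>
          (hasDerivAt_deriv_zernikeTerm (hle hj) n w hz).differentiableAt
        filter_upwards [isOpen_ne.mem_nhds hz] with u hu using
          (hasDerivAt_zernikeTerm (hle hj) n w hu).differentiableAt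
    _ = g 0 - g (m + 1) := by rw [sum_congr rfl hterm, sum_range_sub']
    -- The upper boundary term vanishes because `m.choose (m + 1) = 0`.
    _ = 0 := by simp [g, zernikeCoeff]

theorem fracZernike_ode_general (κ ρ : 𝕜) (m : ℕ) (n : ℤ) (w z : 𝕜) (hz : z ≠ 0) :
    z ^ 2 * (1 - z * w) * deriv (deriv (fun u => pochhammerZernike κ ρ m n u w)) z
      + ((m + ρ - n + 1) - (κ + m + ρ - n + 2) * (z * w)) * z *
          deriv (fun u => pochhammerZernike κ ρ m n u w) z
      + n * (κ + m + ρ + 1) * (z * w) * pochhammerZernike κ ρ m n z w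
    = ρ * (n - m) * pochhammerZernike κ ρ m n z w :=
  sub_eq_zero.1 (zernikeOperator_pochhammerZernike κ ρ m n w hz)

end PochhammerForm

-- Stated with inverses so that it holds at the poles of `Gamma`, where `Gamma` takes the value `0`.
theorem inv_Gamma_eq_ascPochhammer_mul_inv_Gamma (s : ℂ) (k : ℕ) :
    (Gamma s)⁻¹ = (ascPochhammer ℂ k).eval s * (Gamma (s + k))⁻¹ := by
  induction k with
  | zero => simp
  | succ k ih =>
    have hrec := one_div_Gamma_eq_self_mul_one_div_Gamma_add_one (s + k)
    rw [ih, ascPochhammer_succ_eval, hrec, mul_assoc, Nat.cast_add_one, add_assoc]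

theorem Gamma_ofReal_add_natCast_add_one_ne_zero {x : ℝ} (hx : -1 < x) (k : ℕ) :
    Gamma (x + k + 1) ≠ 0 := by
  refine Gamma_ne_zero_of_re_pos ?_
  simp only [add_re, ofReal_re, natCast_re, one_re]
  linarith [k.cast_nonneg (α := ℝ)]

theorem fracZernike_eq_pochhammerZernike {κ ρ : ℝ} {m n : ℕ} (hκ : Gamma (κ + m + 1) ≠ 0)
    (hρ : Gamma (ρ + n + 1) ≠ 0) (z w : ℂ) :
    fracZernike κ ρ m n z w = pochhammerZernike (κ : ℂ) (ρ : ℂ) m n z w := by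
  rw [add_comm (ρ : ℂ)] at hρ
  refine sum_congr rfl fun j hj => ?_
  obtain ⟨k, rfl⟩ := Nat.exists_eq_add_of_le (mem_range_succ_iff.1 hj)
  have hasc : (Gamma (κ + j + 1))⁻¹ = (ascPochhammer ℂ k).eval (κ + j + 1 : ℂ) *
      (Gamma (κ + (j + k : ℕ) + 1))⁻¹ := by
    rw [inv_Gamma_eq_ascPochhammer_mul_inv_Gamma _ k]
    push_cast
    ring_nf
  have hdesc : (Gamma (n + ρ - j + 1))⁻¹ = (descPochhammer ℂ j).eval (n + ρ : ℂ) *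
      (Gamma (n + ρ + 1))⁻¹ := by
    rw [inv_Gamma_eq_ascPochhammer_mul_inv_Gamma _ j, descPochhammer_eval_eq_ascPochhammer]
    ring_nf
  have hchoose : ((j + k).choose j : ℂ) = (j + k).factorial / (j.factorial * k.factorial) :=
    Nat.cast_add_choose ℂ
  rw [zernikeCoeff, zernikeTerm, hchoose, Nat.add_sub_cancel_left]
  simp only [div_eq_mul_inv, mul_inv, hasc, hdesc, Int.cast_natCast]
  field_simp

/-- The second order differential equation satisfied by the fractional Zernike function
`F(u) = Z^{κ,ρ}_{m,n}(u,w)` as a function of the first variable. -/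
theorem fracZernike_ode (κ ρ : ℝ) (hκ : -1 < κ) (hρ : -1 < ρ) (m n : ℕ) (w z : ℂ)
    (hz : z ≠ 0) :
    z ^ 2 * (1 - z * w) * deriv (deriv (fun u => fracZernike κ ρ m n u w)) z
      + (((m : ℂ) + ρ - n + 1) - ((κ : ℂ) + m + ρ - n + 2) * (z * w)) * z *
          deriv (fun u => fracZernike κ ρ m n u w) z
      + (n : ℂ) * ((κ : ℂ) + m + ρ + 1) * (z * w) * fracZernike κ ρ m n z w
    = (ρ : ℂ) * ((n : ℂ) - m) * fracZernike κ ρ m n z w := by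
  simpa only [Int.cast_natCast, fracZernike_eq_pochhammerZernike
      (Gamma_ofReal_add_natCast_add_one_ne_zero hκ m)
      (Gamma_ofReal_add_natCast_add_one_ne_zero hρ n)]
    using fracZernike_ode_general (κ : ℂ) ρ m n w z hz
end

section
/- Let κ > -1 and ρ > -1 be real, m, n nonnegative integers, and w ∈ ℂ. Let z ∈ ℂ with z ∉ (-∞,0] and 1-zw ∉ (-∞,0], and let f be analytic on an open neighborhood of z contained in {u : u ∉ (-∞,0], 1-uw ∉ (-∞,0]}. Then the following Burchnall-type operational formula holds: D^m[u ↦ u^n · u^ρ · (1-uw)^{κ+m} · f(u)](z) = (-1)^m · m! · z^ρ · (1-zw)^κ · Σ_{j=0}^{m} [(-1)^j (1-zw)^j / (j! (m-j)!)] · Z^{κ+j,ρ}_{m-j,n}(z,w) · f^{(j)}(z), where D^m is the m-th complex derivative in u with w held fixed and f^{(j)} is the j-th derivative of f. -/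
/-!
By Leibniz' rule applied to the two power factors, `fracZernike` satisfies the Rodrigues formula
`D^m [u^(n+ρ) (1 - uw)^(κ+m)] = (-1)^m z^ρ (1 - zw)^κ Z^{κ,ρ}_{m,n}(z,w)`. A second application of
Leibniz' rule, to the product of this weight and `f`, leaves the derivatives of order `m - j` of the
weight; writing `κ + m = (κ + j) + (m - j)`, each of them is again given by the Rodrigues formula,
now with parameters `κ + j` and `m - j`.
-/

open Complex Finset

lemma neg_one_pow_sub {R : Type*} [Ring R] {j m : ℕ} (h : j ≤ m) :
    (-1 : R) ^ (m - j) = (-1) ^ m * (-1) ^ j := by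
  rw [← pow_add, neg_one_pow_congr]
  rw [Nat.even_sub h, Nat.even_add]

-- At a pole of the denominator both sides vanish: `Gamma` is `0` at its poles, and `a` is then one
-- of the roots `0, ..., i - 1` of the falling factorial.
lemma Gamma_add_one_div_Gamma_sub_natCast_add_one {a : ℂ} (ha : ∀ k : ℕ, a + 1 ≠ -k) (i : ℕ) :
    Gamma (a + 1) / Gamma (a - i + 1) = (descPochhammer ℂ i).eval a := by
  induction i with
  | zero => simp [div_self (Gamma_ne_zero ha)]
  | succ i ih =>
    calc Gamma (a + 1) / Gamma (a - (i + 1 : ℕ) + 1)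
        = Gamma (a + 1) * (Gamma (a - i))⁻¹ := by
          rw [div_eq_mul_inv, Nat.cast_succ, sub_add_eq_sub_sub, sub_add_cancel]
      _ = Gamma (a + 1) / Gamma (a - i + 1) * (a - i) := by
          rw [one_div_Gamma_eq_self_mul_one_div_Gamma_add_one]; ring
      _ = (descPochhammer ℂ (i + 1)).eval a := by rw [ih, descPochhammer_succ_eval]

lemma contDiffAt_cpow_const {E : Type*} [NormedAddCommGroup E] [NormedSpace ℂ E] {N : WithTop ℕ∞}
    {g : E → ℂ} {x : E} (hg : ContDiffAt ℂ N g x) (b : ℂ) (hx : g x ∈ slitPlane) :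
    ContDiffAt ℂ N (fun u => g u ^ b) x :=
  (analyticAt_id.cpow analyticAt_const hx).contDiffAt.comp x hg

lemma iteratedDeriv_cpow_const_of_hasDerivAt_const {g : ℂ → ℂ} {d : ℂ}
    (hg : ∀ u, HasDerivAt g d u) (b : ℂ) (i : ℕ) {z : ℂ} (hz : g z ∈ slitPlane) :
    iteratedDeriv i (fun u => g u ^ b) z
      = (descPochhammer ℂ i).eval b * d ^ i * g z ^ (b - i) := by
  induction i generalizing z with
  | zero => simp
  | succ i ih =>
    have near : iteratedDeriv i (fun u => g u ^ b) =ᶠ[nhds z]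
        fun u => (descPochhammer ℂ i).eval b * d ^ i * g u ^ (b - i) := by
      filter_upwards [(hg z).continuousAt.preimage_mem_nhds (isOpen_slitPlane.mem_nhds hz)]
        with u hu using ih hu
    rw [iteratedDeriv_succ, near.deriv_eq, (((hg z).cpow_const hz).const_mul _).deriv,
      descPochhammer_succ_eval, Nat.cast_succ, sub_add_eq_sub_sub]
    ring

section

variable {κ ρ : ℝ} {m n : ℕ} {z w : ℂ}

lemma fracZernike_eq_sum_descPochhammer (hκ : ∀ k : ℕ, κ + m + 1 ≠ -k)
    (hρ : ∀ k : ℕ, n + ρ + 1 ≠ -k) :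
    fracZernike κ ρ m n z w = ∑ j ∈ range (m + 1),
      (-1) ^ j * m.choose j * (descPochhammer ℂ j).eval ((n : ℂ) + ρ) *
        (descPochhammer ℂ (m - j)).eval ((κ : ℂ) + m) *
        (1 - z * w) ^ j * z ^ ((n : ℤ) - j) * w ^ (m - j) := by
  refine sum_congr rfl fun j hj => ?_
  have hjm : j ≤ m := mem_range_succ_iff.1 hj
  have hκj : (κ : ℂ) + m - (m - j : ℕ) + 1 = κ + j + 1 := by
    rw [Nat.cast_sub hjm]; ring
  rw [← Gamma_add_one_div_Gamma_sub_natCast_add_one fun k => mod_cast hρ k,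
    ← Gamma_add_one_div_Gamma_sub_natCast_add_one fun k => mod_cast hκ k,
    hκj, Nat.cast_choose ℂ hjm]
  ring

theorem fracZernike_rodrigues (hκ : ∀ k : ℕ, κ + m + 1 ≠ -k) (hρ : ∀ k : ℕ, n + ρ + 1 ≠ -k)
    (hz : z ∈ slitPlane) (hzw : 1 - z * w ∈ slitPlane) :
    iteratedDeriv m (fun u : ℂ => u ^ n * u ^ (ρ : ℂ) * (1 - u * w) ^ ((κ : ℂ) + m)) z
      = (-1) ^ m * z ^ (ρ : ℂ) * (1 - z * w) ^ (κ : ℂ) * fracZernike κ ρ m n z w := by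
  have hweight : (fun u : ℂ => u ^ n * u ^ (ρ : ℂ) * (1 - u * w) ^ ((κ : ℂ) + m)) =ᶠ[nhds z]
      fun u => u ^ ((n : ℂ) + ρ) * (1 - u * w) ^ ((κ : ℂ) + m) := by
    filter_upwards [isOpen_ne.mem_nhds (slitPlane_ne_zero hz)] with u hu
    rw [cpow_add _ _ hu, cpow_natCast]
  have hlin (u : ℂ) : HasDerivAt (fun u => 1 - u * w) (-w) u :=
    (hasDerivAt_mul_const w).const_sub 1
  rw [hweight.iteratedDeriv_eq,
    iteratedDeriv_fun_mul (contDiffAt_cpow_const contDiffAt_fun_id _ hz)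
      (contDiffAt_cpow_const (by fun_prop) _ hzw),
    fracZernike_eq_sum_descPochhammer hκ hρ, mul_sum]
  refine sum_congr rfl fun j hj => ?_
  have hjm : j ≤ m := mem_range_succ_iff.1 hj
  have hz_pow : z ^ ((n : ℂ) + ρ - j) = z ^ (ρ : ℂ) * z ^ ((n : ℤ) - j) := by
    rw [← cpow_intCast, ← cpow_add _ _ (slitPlane_ne_zero hz)]
    push_cast; ring_nf
  have hzw_pow : (1 - z * w) ^ ((κ : ℂ) + m - (m - j : ℕ))
      = (1 - z * w) ^ (κ : ℂ) * (1 - z * w) ^ j := by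
    rw [← cpow_natCast, ← cpow_add _ _ (slitPlane_ne_zero hzw), Nat.cast_sub hjm]
    ring_nf
  rw [iteratedDeriv_cpow_const_of_hasDerivAt_const hasDerivAt_id' _ _ hz,
    iteratedDeriv_cpow_const_of_hasDerivAt_const hlin _ _ hzw, hz_pow, hzw_pow, neg_pow w,
    neg_one_pow_sub hjm]
  ring

theorem fracZernike_burchnall_general (hκ : ∀ k : ℕ, κ + m + 1 ≠ -k)
    (hρ : ∀ k : ℕ, n + ρ + 1 ≠ -k) (hz : z ∈ slitPlane) (hzw : 1 - z * w ∈ slitPlane)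
    {f : ℂ → ℂ} (hf : ContDiffAt ℂ m f z) :
    iteratedDeriv m (fun u : ℂ => u ^ n * u ^ (ρ : ℂ) * (1 - u * w) ^ ((κ : ℂ) + m) * f u) z
      = (-1) ^ m * m.factorial * z ^ (ρ : ℂ) * (1 - z * w) ^ (κ : ℂ) *
          ∑ j ∈ range (m + 1),
            (-1) ^ j * (1 - z * w) ^ j / (j.factorial * (m - j).factorial) *
              fracZernike (κ + j) ρ (m - j) n z w * iteratedDeriv j f z := by
  have hweight : ContDiffAt ℂ m
      (fun u : ℂ => u ^ n * u ^ (ρ : ℂ) * (1 - u * w) ^ ((κ : ℂ) + m)) z :=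
    ((contDiffAt_id.pow n).mul (contDiffAt_cpow_const contDiffAt_id _ hz)).mul
      (contDiffAt_cpow_const (by fun_prop) _ hzw)
  simp only [mul_comm _ (f _)]
  rw [iteratedDeriv_fun_mul hf hweight, mul_sum]
  refine sum_congr rfl fun j hj => ?_
  have hjm : j ≤ m := mem_range_succ_iff.1 hj
  have hκm : κ + m = (κ + j : ℝ) + (m - j : ℕ) := by
    rw [Nat.cast_sub hjm]; ring
  have hκm_complex : (κ : ℂ) + m = (κ + j : ℝ) + (m - j : ℕ) := mod_cast congrArg ofReal hκm
  have hzw_pow : (1 - z * w) ^ ((κ + j : ℝ) : ℂ) = (1 - z * w) ^ (κ : ℂ) * (1 - z * w) ^ j := by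
    rw [ofReal_add, ofReal_natCast, cpow_add _ _ (slitPlane_ne_zero hzw), cpow_natCast]
  rw [hκm_complex, fracZernike_rodrigues (hκm ▸ hκ) hρ hz hzw, hzw_pow, Nat.cast_choose ℂ hjm,
    neg_one_pow_sub hjm]
  ring

end

/-- Burchnall-type operational formula for the fractional Zernike functions. -/
theorem fracZernike_burchnall (κ ρ : ℝ) (hκ : -1 < κ) (hρ : -1 < ρ) (m n : ℕ) (w : ℂ)
    (z : ℂ) (hz : ¬(z.re ≤ 0 ∧ z.im = 0)) (h1 : ¬((1 - z * w).re ≤ 0 ∧ (1 - z * w).im = 0))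
    (U : Set ℂ) (hU : IsOpen U) (hzU : z ∈ U)
    (hUsub : U ⊆ {u : ℂ | ¬(u.re ≤ 0 ∧ u.im = 0) ∧ ¬((1 - u * w).re ≤ 0 ∧ (1 - u * w).im = 0)})
    (f : ℂ → ℂ) (hf : AnalyticOnNhd ℂ f U) :
    iteratedDeriv m (fun u : ℂ => u ^ n * u ^ (ρ : ℂ) * (1 - u * w) ^ ((κ : ℂ) + m) * f u) z
      = (-1 : ℂ) ^ m * (Nat.factorial m : ℂ) * z ^ (ρ : ℂ) * (1 - z * w) ^ (κ : ℂ) *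
          ∑ j ∈ Finset.range (m + 1),
            (-1 : ℂ) ^ j * (1 - z * w) ^ j /
                ((Nat.factorial j : ℂ) * (Nat.factorial (m - j) : ℂ)) *
              fracZernike (κ + j) ρ (m - j) n z w * iteratedDeriv j f z :=
  fracZernike_burchnall_general (fun k h => by linarith) (fun k h => by linarith)
    (mem_slitPlane_iff_not_le_zero.2 hz) (mem_slitPlane_iff_not_le_zero.2 h1) (hf z hzU).contDiffAt
end
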